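/- Let X be a simplicial surface. Then the following are equivalent: (a) Aut(X) acts transitively on the edges X_1, has exactly one orbit on the faces X_2, and the stabiliser in Aut(X) of every edge has order 2; (b) Aut(X) acts transitively on the faces X_2, has exactly one orbit on the vertices X_0, and the stabiliser in Aut(X) of every face has order 3. -/

import Mathlib

open Finset

/-- A (connected) simplicial surface: a finite, downward-closed family of nonempty subsets of
the vertex set `α`, pure of dimension 2, such that every edge lies in exactly two faces,
the faces around each vertex form an umbrella, and the surface is connected. -/
structure SimplicialSurface (α : Type*) [Fintype α] [DecidableEq α] where
  cplx : Finset (Finset α)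
  nonempty_of_mem : ∀ s ∈ cplx, s.Nonempty
  down_closed : ∀ s ∈ cplx, ∀ t : Finset α, t.Nonempty → t ⊆ s → t ∈ cplx
  card_le_three : ∀ s ∈ cplx, s.card ≤ 3
  pure_two : ∀ s ∈ cplx, ∃ F ∈ cplx, s ⊆ F ∧ F.card = 3
  dim_two : ∃ F ∈ cplx, F.card = 3
  all_vertices : ∀ x : α, {x} ∈ cplx
  edge_in_two_faces : ∀ e ∈ cplx, e.card = 2 →
    (cplx.filter (fun F => e ⊆ F ∧ F.card = 3)).card = 2
  umbrella_exists : ∀ v : α, ∃ n : ℕ, 0 < n ∧ ∃ u : Fin n → Finset α,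
    Function.Injective u ∧
    (∀ i, u i ∈ cplx ∧ (u i).card = 3 ∧ v ∈ u i) ∧
    (∀ F ∈ cplx, F.card = 3 → v ∈ F → ∃ i, u i = F) ∧
    (∀ i : Fin n, (u i ∩ u (finRotate n i)).card = 2)
  connected : ∀ F ∈ cplx, ∀ G ∈ cplx, F.card = 3 → G.card = 3 →
    Relation.ReflTransGen (fun A B => A ∈ cplx ∧ B ∈ cplx ∧ (A ∩ B).card = 2) F G

lemma Equiv.Perm.finset_image_mul {α : Type*} [DecidableEq α] (π σ : Equiv.Perm α)
    (s : Finset α) :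
    Finset.image ⇑(π * σ) s = Finset.image ⇑π (Finset.image ⇑σ s) := by
  rw [Finset.image_image]
  rfl

namespace SimplicialSurface

variable {α : Type*} [Fintype α] [DecidableEq α] (X : SimplicialSurface α)

/-- The set `X_2` of faces of `X`, i.e. the 3-element members. -/
def faces : Finset (Finset α) := X.cplx.filter fun s => s.card = 3

/-- The set `X_1` of edges of `X`, i.e. the 2-element members. -/
def edges : Finset (Finset α) := X.cplx.filter fun s => s.card = 2

/-- The automorphism group of `X`: permutations of the vertices mapping members of the
complex to members of the complex. -/
def aut : Subgroup (Equiv.Perm α) where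
  carrier := { π | ∀ s : Finset α, s ∈ X.cplx ↔ Finset.image ⇑π s ∈ X.cplx }
  one_mem' := by intro s; simp
  mul_mem' := by
    intro π σ hπ hσ s
    rw [Equiv.Perm.finset_image_mul, ← hπ (Finset.image ⇑σ s), ← hσ s]
  inv_mem' := by
    intro π hπ s
    have h2 : Finset.image ⇑π (Finset.image ⇑π⁻¹ s) = s := by ext x; simp
    have h := hπ (Finset.image ⇑π⁻¹ s)
    rw [h2] at h
    exact h.symm

/-- The setwise stabiliser in `Aut(X)` of a set `s` of vertices. -/
def stab (s : Finset α) : Subgroup (Equiv.Perm α) where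
  carrier := { π | π ∈ X.aut ∧ Finset.image ⇑π s = s }
  one_mem' := ⟨X.aut.one_mem, by simp⟩
  mul_mem' := by
    rintro π σ ⟨hπ, hπs⟩ ⟨hσ, hσs⟩
    exact ⟨X.aut.mul_mem hπ hσ, by rw [Equiv.Perm.finset_image_mul, hσs, hπs]⟩
  inv_mem' := by
    rintro π ⟨hπ, hπs⟩
    refine ⟨X.aut.inv_mem hπ, ?_⟩
    calc Finset.image ⇑π⁻¹ s = Finset.image ⇑π⁻¹ (Finset.image ⇑π s) := by rw [hπs]
      _ = s := by ext x; simp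

/-- `X` is edge-transitive if `Aut(X)` acts transitively on the edges `X_1`. -/
def EdgeTransitive : Prop :=
  ∀ e₁ ∈ X.edges, ∀ e₂ ∈ X.edges, ∃ π ∈ X.aut, Finset.image ⇑π e₁ = e₂

/-- The orbit of a set of vertices under `Aut(X)`. -/
def orbit (s : Finset α) : Set (Finset α) := { t | ∃ π ∈ X.aut, Finset.image ⇑π s = t }

/-- The set of `Aut(X)`-orbits on the faces of `X`. -/
def faceOrbits : Set (Set (Finset α)) := { O | ∃ F ∈ X.faces, O = X.orbit F }

/-- The set of `Aut(X)`-orbits on the vertices of `X`. -/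
def vertexOrbits : Set (Set α) := { O | ∃ v : α, O = { w | ∃ π ∈ X.aut, π v = w } }

/-- The degree of a vertex: the number of faces containing it. -/
def degree (v : α) : ℕ := (X.faces.filter fun F => v ∈ F).card

end SimplicialSurface

namespace SimplicialSurface

section helpers

variable {α : Type*} [Fintype α] [DecidableEq α] (X : SimplicialSurface α)

lemma mem_faces' {F : Finset α} : F ∈ X.faces ↔ F ∈ X.cplx ∧ F.card = 3 := by
  simp [faces]

lemma mem_edges' {F : Finset α} : F ∈ X.edges ↔ F ∈ X.cplx ∧ F.card = 2 := by
  simp [edges]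

lemma card_img (π : Equiv.Perm α) (s : Finset α) : (Finset.image ⇑π s).card = s.card :=
  Finset.card_image_of_injective _ π.injective

/-- An automorphism fixing an edge pointwise and one face on it fixes every face on it. -/
lemma fix_adj {π : Equiv.Perm α} (hπ : π ∈ X.aut) {e A B : Finset α}
    (he : e.card = 2) (hA : A ∈ X.cplx) (hA3 : A.card = 3) (hB : B ∈ X.cplx) (hB3 : B.card = 3)
    (heA : e ⊆ A) (heB : e ⊆ B) (hfix : ∀ x ∈ A, π x = x) : ∀ x ∈ B, π x = x := by
  by_cases hAB : A = B
  · subst hAB; exact hfix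
  have hec : e ∈ X.cplx := X.down_closed A hA e (Finset.card_pos.1 (by omega)) heA
  have h2 := X.edge_in_two_faces e hec he
  have hsub : ({A, B} : Finset (Finset α)) ⊆ X.cplx.filter (fun F => e ⊆ F ∧ F.card = 3) := by
    intro F hF
    simp only [Finset.mem_insert, Finset.mem_singleton] at hF
    rcases hF with rfl | rfl <;> simp [*]
  have heq := Finset.eq_of_subset_of_card_le hsub (by rw [h2, Finset.card_pair hAB])
  have hie : Finset.image ⇑π e = e := by
    rw [Finset.image_congr (g := id) (fun x hx => hfix x (heA hx))]; simp
  have hiA : Finset.image ⇑π A = A := by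
    rw [Finset.image_congr (g := id) (fun x hx => hfix x hx)]; simp
  have hiB : Finset.image ⇑π B ∈ ({A, B} : Finset (Finset α)) := by
    rw [heq, Finset.mem_filter]
    refine ⟨(hπ B).1 hB, ?_, by rw [card_img, hB3]⟩
    rw [← hie]; exact Finset.image_subset_image heB
  have hiB' : Finset.image ⇑π B = B := by
    simp only [Finset.mem_insert, Finset.mem_singleton] at hiB
    rcases hiB with h | h
    · exact absurd (Finset.image_injective π.injective (h.trans hiA.symm)).symm hAB
    · exact h
  intro x hx
  by_cases hxe : x ∈ e
  · exact hfix x (heA hxe)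
  have hpx : π x ∈ B := by rw [← hiB']; exact Finset.mem_image_of_mem _ hx
  have hpe : π x ∉ e := by
    intro h
    rw [← hie] at h
    obtain ⟨y, hy, hyx⟩ := Finset.mem_image.1 h
    exact hxe (π.injective hyx ▸ hy)
  have hc : (B \ e).card ≤ 1 := by
    rw [Finset.card_sdiff_of_subset heB]; omega
  exact Finset.card_le_one.1 hc _ (by simp [*]) _ (by simp [*])

lemma rigid {π : Equiv.Perm α} (hπ : π ∈ X.aut) {F : Finset α} (hF : F ∈ X.faces)
    (hfix : ∀ x ∈ F, π x = x) : π = 1 := by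
  rw [mem_faces'] at hF
  have key : ∀ G : Finset α,
      Relation.ReflTransGen (fun A B => A ∈ X.cplx ∧ B ∈ X.cplx ∧ (A ∩ B).card = 2) F G →
      ∀ H ∈ X.cplx, H.card = 3 → G ⊆ H → ∀ x ∈ H, π x = x := by
    intro G hG
    induction hG with
    | refl =>
      intro H _ h3 hs
      have := Finset.eq_of_subset_of_card_le hs (by omega)
      subst this; exact hfix
    | tail _ hstep ih =>
      obtain ⟨hA, hB, hc⟩ := hstep
      intro H hH h3 hs
      obtain ⟨A', hA', hAA', hA3⟩ := X.pure_two _ hA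
      exact X.fix_adj hπ hc hA' hA3 hH h3 (Finset.inter_subset_left.trans hAA')
        (Finset.inter_subset_right.trans hs) (ih A' hA' hA3 hAA')
  ext x
  obtain ⟨G, hG, hxG, hG3⟩ := X.pure_two _ (X.all_vertices x)
  exact key G (X.connected F hF.1 G hG hF.2 hG3) G hG hG3 (Finset.Subset.refl _) x
    (by simpa using hxG)

lemma rot_exists {F : Finset α} (hF : F ∈ X.faces) (h3 : Nat.card (X.stab F) = 3) {v : α}
    (hv : v ∈ F) : ∃ π ∈ X.stab F, F = {v, π v, π (π v)} ∧ π (π (π v)) = v := by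
  have hF' := X.mem_faces'.1 hF
  haveI : Fact (Nat.Prime 3) := ⟨Nat.prime_three⟩
  obtain ⟨⟨π, hs⟩, ho⟩ := exists_prime_orderOf_dvd_card' (G := X.stab F) 3 (by rw [h3])
  have hp3 : π ^ 3 = 1 := by
    have := pow_orderOf_eq_one (⟨π, hs⟩ : X.stab F)
    rw [ho] at this
    simpa using congrArg Subtype.val this
  have hne : π ≠ 1 := by
    rintro rfl
    have : orderOf (1 : X.stab F) = 3 := ho
    simp at this
  have hm : ∀ x ∈ F, π x ∈ F := fun x hx => by
    have := Finset.mem_image_of_mem π hx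
    rwa [hs.2] at this
  have h333 : ∀ x, π (π (π x)) = x := fun x => by
    have := congrArg (fun σ : Equiv.Perm α => σ x) hp3
    simpa [pow_succ] using this
  have hnf : ∀ x ∈ F, π x ≠ x := by
    intro x hx hxx
    have hsq : π * π = 1 := by
      apply X.rigid (X.aut.mul_mem hs.1 hs.1) hF
      intro y hy
      by_contra hyy
      simp only [Equiv.Perm.mul_apply] at hyy
      have h1 : π y ≠ y := fun h => hyy (by rw [h, h])
      have h2 : y ≠ x := fun h => h1 (h ▸ hxx)
      have h3 : π y ≠ x := fun h => h2 (π.injective (h.trans hxx.symm))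
      have h4 : π (π y) ≠ x := fun h => h3 (π.injective (h.trans hxx.symm))
      have h5 : π (π y) ≠ π y := fun h => h1 (π.injective h)
      have hsub : ({x, y, π y, π (π y)} : Finset α) ⊆ F := by
        intro z hz
        simp only [Finset.mem_insert, Finset.mem_singleton] at hz
        rcases hz with rfl | rfl | rfl | rfl
        · exact hx
        · exact hy
        · exact hm _ hy
        · exact hm _ (hm _ hy)
      have hc := Finset.card_le_card hsub
      have h4c : ({x, y, π y, π (π y)} : Finset α).card = 4 := by
        rw [Finset.card_eq_of_equiv_fin]
        exact Fintype.equivFinOfCardEq (by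
          rw [Fintype.card_coe]
          rw [Finset.card_insert_of_notMem, Finset.card_insert_of_notMem,
            Finset.card_insert_of_notMem, Finset.card_singleton]
          · simpa using Ne.symm h5
          · simp only [Finset.mem_insert, Finset.mem_singleton, not_or]
            exact ⟨Ne.symm h1, Ne.symm hyy⟩
          · simp only [Finset.mem_insert, Finset.mem_singleton, not_or]
            exact ⟨Ne.symm h2, Ne.symm h3, Ne.symm h4⟩)
      omega
    apply hne
    rw [pow_succ, pow_two, hsq, one_mul] at hp3
    exact hp3
  refine ⟨π, hs, ?_, h333 v⟩
  have h1 := hnf v hv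
  have h2 := hnf _ (hm v hv)
  have h3 := hnf _ (hm _ (hm v hv))
  rw [h333] at h3
  symm
  apply Finset.eq_of_subset_of_card_le
  · intro z hz
    simp only [Finset.mem_insert, Finset.mem_singleton] at hz
    rcases hz with rfl | rfl | rfl
    · exact hv
    · exact hm _ hv
    · exact hm _ (hm _ hv)
  · rw [Finset.card_eq_three.2 ⟨_, _, _, Ne.symm h1, h3, Ne.symm h2, rfl⟩, hF'.2]

lemma vert_trans {F : Finset α} (hF : F ∈ X.faces) (h3 : Nat.card (X.stab F) = 3) {v w : α}
    (hv : v ∈ F) (hw : w ∈ F) : ∃ π ∈ X.stab F, π v = w := by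
  obtain ⟨π, hs, hFe, _⟩ := X.rot_exists hF h3 hv
  rw [hFe] at hw
  simp only [Finset.mem_insert, Finset.mem_singleton] at hw
  rcases hw with rfl | rfl | rfl
  · exact ⟨1, (X.stab F).one_mem, rfl⟩
  · exact ⟨π, hs, rfl⟩
  · exact ⟨π * π, (X.stab F).mul_mem hs hs, rfl⟩

lemma edge_face_trans {F : Finset α} (hF : F ∈ X.faces) (h3 : Nat.card (X.stab F) = 3)
    {e d : Finset α} (he : e ⊆ F) (he2 : e.card = 2) (hd : d ⊆ F) (hd2 : d.card = 2) :
    ∃ π ∈ X.stab F, Finset.image ⇑π e = d := by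
  have hF' := X.mem_faces'.1 hF
  have aux : ∀ c : Finset α, c ⊆ F → c.card = 2 → ∃ x ∈ F, c = F.erase x := by
    intro c hc hc2
    have h1 : (F \ c).card = 1 := by rw [Finset.card_sdiff_of_subset hc]; omega
    obtain ⟨x, hx⟩ := Finset.card_eq_one.1 h1
    have hxm : x ∈ F \ c := by rw [hx]; simp
    refine ⟨x, (Finset.mem_sdiff.1 hxm).1, ?_⟩
    rw [← Finset.sdiff_singleton_eq_erase, ← hx, Finset.sdiff_sdiff_eq_self hc]
  obtain ⟨x, hx, rfl⟩ := aux e he he2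
  obtain ⟨y, hy, rfl⟩ := aux d hd hd2
  obtain ⟨π, hs, hxy⟩ := X.vert_trans hF h3 hx hy
  refine ⟨π, hs, ?_⟩
  rw [Finset.image_erase π.injective, hs.2, hxy]

open scoped Pointwise in
lemma orbit_stab (S : Finset (Finset α)) (s : Finset α) (hs : s ∈ S)
    (hS : ∀ t ∈ S, ∀ π ∈ X.aut, Finset.image ⇑π t ∈ S)
    (htr : ∀ t ∈ S, ∃ π ∈ X.aut, Finset.image ⇑π s = t) :
    S.card * Nat.card (X.stab s) = Nat.card X.aut := by
  have h := Nat.card_congr (MulAction.orbitProdStabilizerEquivGroup X.aut s)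
  rw [Nat.card_prod] at h
  have h1 : Nat.card (MulAction.orbit X.aut s) = S.card := by
    have : MulAction.orbit X.aut s = (S : Set (Finset α)) := by
      ext t
      constructor
      · rintro ⟨⟨π, hπ⟩, rfl⟩
        exact hS s hs π hπ
      · intro ht
        obtain ⟨π, hπ, h⟩ := htr t ht
        exact ⟨⟨π, hπ⟩, h⟩
    rw [this]; simp
  have h2 : Nat.card (MulAction.stabilizer X.aut s) = Nat.card (X.stab s) :=
    Nat.card_congr
      { toFun := fun g => ⟨g.1.1, g.1.2, g.2⟩
        invFun := fun g => ⟨⟨g.1, g.2.1⟩, g.2.2⟩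
        left_inv := fun _ => rfl
        right_inv := fun _ => rfl }
  rw [← h1, ← h2, h]

lemma double_count : X.faces.card * 3 = X.edges.card * 2 := by
  apply Finset.card_mul_eq_card_mul (fun F e => e ⊆ F)
  · intro F hF
    have hF' := X.mem_faces'.1 hF
    have : Finset.bipartiteAbove (fun F e => e ⊆ F) X.edges F = Finset.powersetCard 2 F := by
      ext e
      simp only [Finset.mem_bipartiteAbove, Finset.mem_powersetCard, mem_edges']
      constructor
      · rintro ⟨⟨_, h⟩, h'⟩; exact ⟨h', h⟩
      · rintro ⟨h', h⟩
        exact ⟨⟨X.down_closed F hF'.1 e (Finset.card_pos.1 (by omega)) h', h⟩, h'⟩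
    rw [this, Finset.card_powersetCard, hF'.2]; rfl
  · intro e he
    rw [mem_edges'] at he
    rw [← X.edge_in_two_faces e he.1 he.2]
    congr 1
    ext F
    simp only [Finset.mem_bipartiteBelow, mem_faces', Finset.mem_filter]
    tauto

lemma count_faces {F : Finset α} (hF : F ∈ X.faces)
    (htr : ∀ F ∈ X.faces, ∀ G ∈ X.faces, ∃ π ∈ X.aut, Finset.image ⇑π F = G) :
    X.faces.card * Nat.card (X.stab F) = Nat.card X.aut := by
  refine X.orbit_stab X.faces F hF ?_ (htr F hF)
  intro t ht π hπ
  rw [mem_faces'] at *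
  exact ⟨(hπ t).1 ht.1, by rw [card_img, ht.2]⟩

lemma count_edges {e : Finset α} (he : e ∈ X.edges) (htr : X.EdgeTransitive) :
    X.edges.card * Nat.card (X.stab e) = Nat.card X.aut := by
  refine X.orbit_stab X.edges e he ?_ (htr e he)
  intro t ht π hπ
  rw [mem_edges'] at *
  exact ⟨(hπ t).1 ht.1, by rw [card_img, ht.2]⟩

lemma face_of_edge {e : Finset α} (he : e ∈ X.edges) : ∃ F ∈ X.faces, e ⊆ F := by
  obtain ⟨F, hF, h, h3⟩ := X.pure_two e (X.mem_edges'.1 he).1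
  exact ⟨F, X.mem_faces'.2 ⟨hF, h3⟩, h⟩

lemma face_trans_of_orbits (h : X.faceOrbits.ncard = 1) :
    ∀ F ∈ X.faces, ∀ G ∈ X.faces, ∃ π ∈ X.aut, Finset.image ⇑π F = G := by
  obtain ⟨O, hO⟩ := Set.ncard_eq_one.1 h
  intro F hF G hG
  have h1 : X.orbit F ∈ X.faceOrbits := ⟨F, hF, rfl⟩
  have h2 : X.orbit G ∈ X.faceOrbits := ⟨G, hG, rfl⟩
  rw [hO, Set.mem_singleton_iff] at h1 h2
  have : G ∈ X.orbit F := by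
    rw [h1, ← h2]; exact ⟨1, X.aut.one_mem, by simp⟩
  exact this

lemma orbits_of_face_trans
    (h : ∀ F ∈ X.faces, ∀ G ∈ X.faces, ∃ π ∈ X.aut, Finset.image ⇑π F = G) :
    X.faceOrbits.ncard = 1 := by
  obtain ⟨F, hF, hF3⟩ := X.dim_two
  have hFf : F ∈ X.faces := X.mem_faces'.2 ⟨hF, hF3⟩
  refine Set.ncard_eq_one.2 ⟨(X.faces : Set (Finset α)), ?_⟩
  have key : ∀ G ∈ X.faces, X.orbit G = (X.faces : Set (Finset α)) := by
    intro G hG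
    ext t
    constructor
    · rintro ⟨π, hπ, rfl⟩
      rw [Finset.mem_coe]
      rw [mem_faces'] at *
      exact ⟨(hπ G).1 hG.1, by rw [card_img, hG.2]⟩
    · intro ht
      exact h G hG t ht
  ext O
  constructor
  · rintro ⟨G, hG, rfl⟩; exact key G hG
  · rintro rfl; exact ⟨F, hFf, (key F hFf).symm⟩

end helpers

end SimplicialSurface

/-- A simplicial surface `X` is edge-transitive with exactly one face orbit and edge
stabilisers of order `2` if and only if it is face-transitive with exactly one vertex orbit
and face stabilisers of order `3`. -/
theorem fe_one_two_iff_vf_one_three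
    {α : Type*} [Fintype α] [DecidableEq α] (X : SimplicialSurface α) :
    (X.EdgeTransitive ∧ X.faceOrbits.ncard = 1 ∧
        ∀ e ∈ X.edges, Nat.card (X.stab e) = 2) ↔
      ((∀ F ∈ X.faces, ∀ G ∈ X.faces, ∃ π ∈ X.aut, Finset.image ⇑π F = G) ∧
        X.vertexOrbits.ncard = 1 ∧
        ∀ F ∈ X.faces, Nat.card (X.stab F) = 3) := by
  have hdc := X.double_count
  obtain ⟨F₀, hF₀, hF₀3⟩ := X.dim_two
  have hF₀f : F₀ ∈ X.faces := X.mem_faces'.2 ⟨hF₀, hF₀3⟩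
  have hpos : 0 < X.faces.card := Finset.card_pos.2 ⟨_, hF₀f⟩
  constructor
  · rintro ⟨het, hfo, hes⟩
    have hft := X.face_trans_of_orbits hfo
    have hepos : 0 < X.edges.card := by omega
    obtain ⟨e, he⟩ := Finset.card_pos.1 hepos
    have hc := X.count_edges he het
    rw [hes e he] at hc
    have hst : ∀ F ∈ X.faces, Nat.card (X.stab F) = 3 := by
      intro F hF
      have := X.count_faces hF hft
      exact Nat.eq_of_mul_eq_mul_left hpos (by omega)
    refine ⟨hft, ?_, hst⟩
    have hvt : ∀ v w : α, ∃ π ∈ X.aut, π v = w := by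
      intro v w
      obtain ⟨F, hF, hv, hF3⟩ := X.pure_two _ (X.all_vertices v)
      obtain ⟨G, hG, hw, hG3⟩ := X.pure_two _ (X.all_vertices w)
      have hF' : F ∈ X.faces := X.mem_faces'.2 ⟨hF, hF3⟩
      have hG' : G ∈ X.faces := X.mem_faces'.2 ⟨hG, hG3⟩
      obtain ⟨σ, hσ, hσF⟩ := hft F hF' G hG'
      have hvG : σ v ∈ G := by
        rw [← hσF]; exact Finset.mem_image_of_mem _ (by simpa using hv)
      obtain ⟨τ, hτ, hτw⟩ := X.vert_trans hG' (hst G hG') hvG (by simpa using hw)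
      exact ⟨τ * σ, X.aut.mul_mem hτ.1 hσ, hτw⟩
    obtain ⟨v₀, -⟩ := X.nonempty_of_mem F₀ hF₀
    refine Set.ncard_eq_one.2 ⟨Set.univ, ?_⟩
    have key : ∀ v : α, { w | ∃ π ∈ X.aut, π v = w } = Set.univ :=
      fun v => Set.eq_univ_of_forall (hvt v)
    ext O
    constructor
    · rintro ⟨v, rfl⟩; exact key v
    · rintro rfl; exact ⟨v₀, (key v₀).symm⟩
  · rintro ⟨hft, -, hst⟩
    have het : X.EdgeTransitive := by
      intro e he d hd
      obtain ⟨F, hF, heF⟩ := X.face_of_edge he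
      obtain ⟨G, hG, hdG⟩ := X.face_of_edge hd
      obtain ⟨σ, hσ, hσF⟩ := hft F hF G hG
      obtain ⟨τ, hτ, hτd⟩ := X.edge_face_trans hG (hst G hG)
        (e := Finset.image ⇑σ e) (by rw [← hσF]; exact Finset.image_subset_image heF)
        (by rw [SimplicialSurface.card_img, (X.mem_edges'.1 he).2]) hdG (X.mem_edges'.1 hd).2
      exact ⟨τ * σ, X.aut.mul_mem hτ.1 hσ, by rw [Equiv.Perm.finset_image_mul, hτd]⟩
    refine ⟨het, X.orbits_of_face_trans hft, ?_⟩
    intro e he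
    have hc := X.count_faces hF₀f hft
    rw [hst _ hF₀f] at hc
    have := X.count_edges he het
    exact Nat.eq_of_mul_eq_mul_left (show 0 < X.edges.card by omega) (by omega)
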